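/- For every Turing machine M and every intended term s of the TRS R_M: R_M is strongly normalizing on s (i.e., no infinite →_{R_M}-rewrite sequence starts at s) if and only if M halts on the configuration Φ(s). -/

import Mathlib

/-! A single rewrite step on an intended term is the same thing as a single step of `M`
on the configuration it denotes.

A term over `Γ ∪ {▷}` contains no state symbol, so it is a normal form (`TapeTerm.normal`), and
the only redex an intended term `q(s, t)` can have is at the root. Comparing the six rules with
the definition of a machine step shows that its contractum is again intended and denotes a
successor configuration (`rewrite_intended`); `▷` plays the part of the infinite blank half-tape,
which is why the tape is read through `tapeOf` with the blank as default letter. Conversely, every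
machine step from the configuration of `q(s, t)` provides a redex (`exists_rewrite`).

Since `M` is deterministic (`TMStep.det`), an infinite rewrite sequence visits every configuration
reachable from the initial one, so none of these is final; and if `M` does not halt, rewriting can
always be continued through intended terms whose configuration does not halt either. -/

/-! ### Turing machines -/

/-- A (deterministic) Turing machine, presented concretely: a finite list of
states `Q`, a finite tape alphabet `Γ`, a designated blank symbol, an initial
state, and a finite list representing the graph of the partial transition
function `δ : Q × Γ ⇀ Q × Γ × {L,R}` (`false` codes `L`, `true` codes `R`). -/
structure TM where
  states : List ℕ
  alphabet : List ℕ
  blank : ℕ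
  start : ℕ
  delta : List ((ℕ × ℕ) × (ℕ × ℕ × Bool))

/-- Well-formedness of a Turing machine description: the blank belongs to the
alphabet, the initial state is a state, all transition entries are well-typed,
the transition list is functional (determinism), and `Q` and `Γ` are disjoint. -/
def WFTM (M : TM) : Prop :=
  M.blank ∈ M.alphabet ∧ M.start ∈ M.states ∧
  (∀ e ∈ M.delta, e.1.1 ∈ M.states ∧ e.1.2 ∈ M.alphabet ∧
      e.2.1 ∈ M.states ∧ e.2.2.1 ∈ M.alphabet) ∧
  (∀ e ∈ M.delta, ∀ e' ∈ M.delta, e.1 = e'.1 → e.2 = e'.2) ∧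
  (∀ q ∈ M.states, q ∉ M.alphabet)

/-- A configuration of a Turing machine: a current state together with the
tape content. -/
def Config : Type := ℕ × (ℤ → ℕ)

/-- The step relation `→_M` on configurations. -/
def TMStep (M : TM) (c c' : Config) : Prop :=
  (∃ f : ℕ, ((c.1, c.2 0), (c'.1, f, false)) ∈ M.delta ∧
      c'.2 1 = f ∧ ∀ n : ℤ, n ≠ 0 → c'.2 (n + 1) = c.2 n) ∨
  (∃ f : ℕ, ((c.1, c.2 0), (c'.1, f, true)) ∈ M.delta ∧
      c'.2 (-1) = f ∧ ∀ n : ℤ, n ≠ 0 → c'.2 (n - 1) = c.2 n)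

/-- `M` halts on configuration `c`: some finite sequence of `→_M`-steps from
`c` reaches a configuration to which no transition applies. -/
def HaltsOn (M : TM) (c : Config) : Prop :=
  ∃ c' : Config, Relation.ReflTransGen (TMStep M) c c' ∧ ∀ c'' : Config, ¬ TMStep M c' c''

/-! ### Terms and rewriting -/

/-- First-order terms over the fixed countably infinite set of variables. -/
inductive Term : Type
  | var : ℕ → Term
  | app : ℕ → List Term → Term

namespace Term

/-- Homomorphic application of a substitution. -/
def subst (σ : ℕ → Term) : Term → Term
  | var n => σ n
  | app f ts => app f (ts.attach.map (fun x => subst σ x.1))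
decreasing_by
  have := List.sizeOf_lt_of_mem x.2
  simp only [Term.app.sizeOf_spec]; omega

end Term

/-- The one-step rewrite relation of a set `R` of rewrite rules: application
of a rule under a substitution, closed under arbitrary one-hole contexts. -/
inductive RewriteS (R : Set (Term × Term)) : Term → Term → Prop
  | rule (l r : Term) (σ : ℕ → Term) (h : (l, r) ∈ R) :
      RewriteS R (l.subst σ) (r.subst σ)
  | congr (f : ℕ) (ts₁ ts₂ : List Term) (t t' : Term) (h : RewriteS R t t') :
      RewriteS R (.app f (ts₁ ++ t :: ts₂)) (.app f (ts₁ ++ t' :: ts₂))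

/-- `R` is strongly normalizing on `t`: no infinite rewrite sequence starts at `t`. -/
def SNonS (R : Set (Term × Term)) (t : Term) : Prop :=
  ¬ ∃ f : ℕ → Term, f 0 = t ∧ ∀ n : ℕ, RewriteS R (f n) (f (n + 1))

/-! ### The TRS `R_M`

The signature of `R_M` consists of a constant `▷` (symbol `0`), a binary
symbol `2*q+1` for each state `q ∈ Q`, and a unary symbol `2*f+2` for each
tape letter `f ∈ Γ`.  (The symbol coding keeps these three kinds disjoint.) -/

/-- The constant `▷`. -/
def triT : Term := .app 0 []

/-- The binary function symbol corresponding to the state `q`, applied to `s` and `t`. -/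
def stT (q : ℕ) (s t : Term) : Term := .app (2 * q + 1) [s, t]

/-- The unary function symbol corresponding to the tape letter `f`, applied to `t`. -/
def ltT (f : ℕ) (t : Term) : Term := .app (2 * f + 2) [t]

/-- The rules of the TRS `R_M` associated with the Turing machine `M`
(`x` is the variable `var 0`, `y` is the variable `var 1`). -/
inductive RMRule (M : TM) : Term → Term → Prop
  | moveR {q f q' f' : ℕ} (h : ((q, f), (q', f', true)) ∈ M.delta) :
      RMRule M (stT q (.var 0) (ltT f (.var 1))) (stT q' (ltT f' (.var 0)) (.var 1))
  | moveL {q f q' f' g : ℕ} (h : ((q, f), (q', f', false)) ∈ M.delta)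
      (hg : g ∈ M.alphabet) :
      RMRule M (stT q (ltT g (.var 0)) (ltT f (.var 1)))
               (stT q' (.var 0) (ltT g (ltT f' (.var 1))))
  | moveLtri {q f q' f' : ℕ} (h : ((q, f), (q', f', false)) ∈ M.delta) :
      RMRule M (stT q triT (ltT f (.var 1)))
               (stT q' triT (ltT M.blank (ltT f' (.var 1))))
  | blankR {q q' f' : ℕ} (h : ((q, M.blank), (q', f', true)) ∈ M.delta) :
      RMRule M (stT q (.var 0) triT) (stT q' (ltT f' (.var 0)) triT)
  | blankL {q q' f' g : ℕ} (h : ((q, M.blank), (q', f', false)) ∈ M.delta)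
      (hg : g ∈ M.alphabet) :
      RMRule M (stT q (ltT g (.var 0)) triT)
               (stT q' (.var 0) (ltT g (ltT f' triT)))
  | blankLtri {q q' f' : ℕ} (h : ((q, M.blank), (q', f', false)) ∈ M.delta) :
      RMRule M (stT q triT triT) (stT q' triT (ltT M.blank (ltT f' triT)))

/-- The TRS `R_M` as a set of rules. -/
def RM (M : TM) : Set (Term × Term) := { p : Term × Term | RMRule M p.1 p.2 }

/-- Ground terms over `Γ ∪ {▷}`: the tape halves of intended terms. -/
inductive TapeTerm (M : TM) : Term → Prop
  | tri : TapeTerm M triT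
  | cons {f : ℕ} {t : Term} : f ∈ M.alphabet → TapeTerm M t → TapeTerm M (ltT f t)

/-- The word of tape letters along a unary spine of a term
(the letter `f ∈ Γ` is represented by the unary symbol `2*f+2`). -/
def wordOf : Term → List ℕ
  | .app f [t] => (f - 2) / 2 :: wordOf t
  | _ => []

/-- The tape with left half `w₁` (read outward from the head, at positions
`-1, -2, …`), right half `w₂` (starting at the head position `0`), and blank
everywhere else. -/
def tapeOf (blank : ℕ) (w₁ w₂ : List ℕ) : ℤ → ℕ := fun n =>
  if 0 ≤ n then w₂.getD n.toNat blank else w₁.getD (-n - 1).toNat blank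

/-! ### Terms over the signature of the system -/

theorem subst_stT (σ : ℕ → Term) (q : ℕ) (a b : Term) :
    (stT q a b).subst σ = stT q (a.subst σ) (b.subst σ) := by
  simp [stT, Term.subst]

theorem subst_ltT (σ : ℕ → Term) (f : ℕ) (a : Term) :
    (ltT f a).subst σ = ltT f (a.subst σ) := by
  simp [ltT, Term.subst]

theorem subst_triT (σ : ℕ → Term) : triT.subst σ = triT := by
  simp [triT, Term.subst]

theorem subst_var (σ : ℕ → Term) (n : ℕ) : (Term.var n).subst σ = σ n := by
  simp [Term.subst]

theorem stT_inj {q q' : ℕ} {a b a' b' : Term} :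
    stT q a b = stT q' a' b' ↔ q = q' ∧ a = a' ∧ b = b' := by
  simp [stT]

theorem wordOf_triT : wordOf triT = [] := by
  simp [triT, wordOf]

theorem wordOf_ltT (f : ℕ) (t : Term) : wordOf (ltT f t) = f :: wordOf t := by
  simp [ltT, wordOf]

theorem tapeTerm_ltT {M : TM} {f : ℕ} {t : Term} :
    TapeTerm M (ltT f t) ↔ f ∈ M.alphabet ∧ TapeTerm M t := by
  refine ⟨fun h => ?_, fun h => .cons h.1 h.2⟩
  generalize hu : ltT f t = u at h
  cases h with
  | tri => simp [ltT, triT] at hu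
  | @cons g _ hf ht =>
    simp only [ltT, Term.app.injEq, List.cons.injEq, and_true] at hu
    obtain ⟨h1, rfl⟩ := hu
    obtain rfl : f = g := by omega
    exact ⟨hf, ht⟩

/-! ### Position of redexes -/

/-- The left-hand side of every rule has a state symbol at its root. -/
theorem RMRule.lhs_root {M : TM} {l r : Term} (h : RMRule M l r) :
    ∃ q a b, l = stT q a b := by
  cases h <;> exact ⟨_, _, _, rfl⟩

theorem TapeTerm.normal {M : TM} {t : Term} (ht : TapeTerm M t) (u : Term) :
    ¬ RewriteS (RM M) t u := by
  induction ht generalizing u with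
  | tri =>
    intro h
    generalize hv : triT = v at h
    cases h with
    | rule l r σ h =>
      obtain ⟨q, a, b, rfl⟩ := RMRule.lhs_root h
      rw [subst_stT] at hv
      simp [stT, triT] at hv
    | congr f ts₁ ts₂ t t' h => simp [triT] at hv
  | @cons f t _ _ ih =>
    intro h
    generalize hv : ltT f t = v at h
    cases h with
    | rule l r σ h =>
      obtain ⟨q, a, b, rfl⟩ := RMRule.lhs_root h
      rw [subst_stT] at hv
      simp only [stT, ltT, Term.app.injEq] at hv
      omega
    | congr g ts₁ ts₂ w w' h =>
      simp only [ltT, Term.app.injEq] at hv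
      have h2 := hv.2
      rcases ts₁ with _ | ⟨a, ts₁⟩
      · simp only [List.nil_append, List.cons.injEq] at h2
        exact ih _ (h2.1 ▸ h)
      · simp at h2

/-- An intended term can only be rewritten at the root. -/
theorem rewrite_root {M : TM} {q : ℕ} {s t u : Term} (hs : TapeTerm M s) (ht : TapeTerm M t)
    (h : RewriteS (RM M) (stT q s t) u) :
    ∃ l r σ, RMRule M l r ∧ stT q s t = l.subst σ ∧ u = r.subst σ := by
  generalize hv : stT q s t = v at h
  cases h with
  | rule l r σ h => exact ⟨l, r, σ, h, rfl, rfl⟩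
  | congr g ts₁ ts₂ w w' h =>
    exfalso
    simp only [stT, Term.app.injEq] at hv
    have h2 := hv.2
    rcases ts₁ with _ | ⟨a, _ | ⟨b, ts₁⟩⟩
    · simp only [List.nil_append, List.cons.injEq] at h2
      exact hs.normal _ (h2.1 ▸ h)
    · simp only [List.cons_append, List.nil_append, List.cons.injEq] at h2
      exact ht.normal _ (h2.2.1 ▸ h)
    · simp at h2

/-! ### Machine steps on pairs of words -/

/-- A machine step to the right, in terms of the words on the two halves of the tape. -/
theorem step_right {M : TM} {q q' f' : ℕ} (w₁ w₂ : List ℕ)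
    (h : ((q, w₂.getD 0 M.blank), (q', f', true)) ∈ M.delta) :
    TMStep M (q, tapeOf M.blank w₁ w₂) (q', tapeOf M.blank (f' :: w₁) w₂.tail) := by
  refine Or.inr ⟨f', by simpa [tapeOf] using h, by simp [tapeOf], fun n hn => ?_⟩
  rcases lt_or_gt_of_ne hn with hn | hn
  · obtain ⟨k, rfl⟩ : ∃ k : ℕ, n = -(k : ℤ) - 1 := ⟨(-n - 1).toNat, by omega⟩
    have h1 : (-(-(k : ℤ) - 1 - 1) - 1).toNat = k + 1 := by omega
    have h2 : (-(-(k : ℤ) - 1) - 1).toNat = k := by omega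
    simp only [tapeOf, h1, h2]
    rw [if_neg (by omega), if_neg (by omega), List.getD_cons_succ]
  · obtain ⟨k, rfl⟩ : ∃ k : ℕ, n = (k : ℤ) + 1 := ⟨(n - 1).toNat, by omega⟩
    have h1 : ((k : ℤ) + 1 - 1).toNat = k := by omega
    have h2 : ((k : ℤ) + 1).toNat = k + 1 := by omega
    simp only [tapeOf, h1, h2]
    rw [if_pos (by omega), if_pos (by omega)]
    cases w₂ <;> simp

/-- A machine step to the left, in terms of the words on the two halves of the tape. -/
theorem step_left {M : TM} {q q' f' : ℕ} (w₁ w₂ : List ℕ)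
    (h : ((q, w₂.getD 0 M.blank), (q', f', false)) ∈ M.delta) :
    TMStep M (q, tapeOf M.blank w₁ w₂)
      (q', tapeOf M.blank w₁.tail (w₁.getD 0 M.blank :: f' :: w₂.tail)) := by
  refine Or.inl ⟨f', by simpa [tapeOf] using h, by simp [tapeOf], fun n hn => ?_⟩
  rcases lt_or_gt_of_ne hn with hn | hn
  · obtain ⟨k, rfl⟩ : ∃ k : ℕ, n = -(k : ℤ) - 1 := ⟨(-n - 1).toNat, by omega⟩
    -- the cell at position `-1` becomes the new head cell
    rcases k with _ | k
    · simp [tapeOf]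
    · have h1 : (-(-((k + 1 : ℕ) : ℤ) - 1 + 1) - 1).toNat = k := by omega
      have h2 : (-(-((k + 1 : ℕ) : ℤ) - 1) - 1).toNat = k + 1 := by omega
      simp only [tapeOf, h1, h2]
      rw [if_neg (by omega), if_neg (by omega)]
      cases w₁ <;> simp
  · obtain ⟨k, rfl⟩ : ∃ k : ℕ, n = (k : ℤ) + 1 := ⟨(n - 1).toNat, by omega⟩
    have h1 : ((k : ℤ) + 1 + 1).toNat = k + 2 := by omega
    have h2 : ((k : ℤ) + 1).toNat = k + 1 := by omega
    simp only [tapeOf, h1, h2]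
    rw [if_pos (by omega), if_pos (by omega)]
    cases w₂ <;> simp

theorem TMStep.det {M : TM} (hM : WFTM M) {c c₁ c₂ : Config}
    (h₁ : TMStep M c c₁) (h₂ : TMStep M c c₂) : c₁ = c₂ := by
  have hdet := hM.2.2.2.1
  rcases h₁ with ⟨f, hf, h0, hn⟩ | ⟨f, hf, h0, hn⟩ <;>
    rcases h₂ with ⟨g, hg, h0', hn'⟩ | ⟨g, hg, h0', hn'⟩ <;>
    have key := hdet _ hf _ hg rfl <;>
    simp only [Prod.mk.injEq, Bool.false_eq_true, Bool.true_eq_false, and_false, and_true] at key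
  · refine Prod.ext key.1 (funext fun n => ?_)
    by_cases h : n = 1
    · rw [h, h0, h0', key.2]
    · rw [← sub_add_cancel n 1, hn _ (by omega), hn' _ (by omega)]
  · refine Prod.ext key.1 (funext fun n => ?_)
    by_cases h : n = -1
    · rw [h, h0, h0', key.2]
    · rw [← add_sub_cancel_right n 1, hn _ (by omega), hn' _ (by omega)]

/-! ### Rewrite steps and machine steps -/

/-- `Intended M u c`: `u` is a term `q(s, t)` with `s` and `t` ground over `Γ ∪ {▷}`, and `c` is
the configuration `Φ(u)`. The state `q` ranges over all natural numbers. -/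
def Intended (M : TM) (u : Term) (c : Config) : Prop :=
  ∃ q s t, u = stT q s t ∧ TapeTerm M s ∧ TapeTerm M t ∧
    c = (q, tapeOf M.blank (wordOf s) (wordOf t))

/-- Each rewrite step on an intended term is a machine step. -/
theorem rewrite_intended {M : TM} (hM : WFTM M) {u v : Term} {c : Config}
    (hu : Intended M u c) (h : RewriteS (RM M) u v) :
    ∃ c', Intended M v c' ∧ TMStep M c c' := by
  obtain ⟨q, s, t, rfl, hs, ht, rfl⟩ := hu
  obtain ⟨l, r, σ, hr, hl, rfl⟩ := rewrite_root hs ht h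
  clear h
  have hb := hM.1
  have hΓ : ∀ {q f q' f' d}, ((q, f), (q', f', d)) ∈ M.delta → f' ∈ M.alphabet :=
    fun h => (hM.2.2.1 _ h).2.2.2
  cases hr with
  | moveR h =>
    simp only [subst_stT, subst_ltT, subst_var, stT_inj] at hl
    obtain ⟨rfl, rfl, rfl⟩ := hl
    rw [tapeTerm_ltT] at ht
    simp only [subst_stT, subst_ltT, subst_var]
    refine ⟨_, ⟨_, _, _, rfl, .cons (hΓ h) hs, ht.2, rfl⟩, ?_⟩
    simp only [wordOf_ltT]
    exact step_right _ (_ :: _) h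
  | moveL h hg =>
    simp only [subst_stT, subst_ltT, subst_var, stT_inj] at hl
    obtain ⟨rfl, rfl, rfl⟩ := hl
    rw [tapeTerm_ltT] at hs ht
    simp only [subst_stT, subst_ltT, subst_var]
    refine ⟨_, ⟨_, _, _, rfl, hs.2, .cons hg (.cons (hΓ h) ht.2), rfl⟩, ?_⟩
    simp only [wordOf_ltT]
    exact step_left (_ :: _) (_ :: _) h
  | moveLtri h =>
    simp only [subst_stT, subst_ltT, subst_var, subst_triT, stT_inj] at hl
    obtain ⟨rfl, rfl, rfl⟩ := hl
    rw [tapeTerm_ltT] at ht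
    simp only [subst_stT, subst_ltT, subst_var, subst_triT]
    refine ⟨_, ⟨_, _, _, rfl, hs, .cons hb (.cons (hΓ h) ht.2), rfl⟩, ?_⟩
    simp only [wordOf_ltT, wordOf_triT]
    exact step_left [] (_ :: _) h
  | blankR h =>
    simp only [subst_stT, subst_var, subst_triT, stT_inj] at hl
    obtain ⟨rfl, rfl, rfl⟩ := hl
    simp only [subst_stT, subst_ltT, subst_var, subst_triT]
    refine ⟨_, ⟨_, _, _, rfl, .cons (hΓ h) hs, ht, rfl⟩, ?_⟩
    simp only [wordOf_ltT, wordOf_triT]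
    exact step_right _ [] h
  | blankL h hg =>
    simp only [subst_stT, subst_ltT, subst_var, subst_triT, stT_inj] at hl
    obtain ⟨rfl, rfl, rfl⟩ := hl
    rw [tapeTerm_ltT] at hs
    simp only [subst_stT, subst_ltT, subst_var, subst_triT]
    refine ⟨_, ⟨_, _, _, rfl, hs.2, .cons hg (.cons (hΓ h) ht), rfl⟩, ?_⟩
    simp only [wordOf_ltT, wordOf_triT]
    exact step_left (_ :: _) [] h
  | blankLtri h =>
    simp only [subst_stT, subst_triT, stT_inj] at hl
    obtain ⟨rfl, rfl, rfl⟩ := hl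
    simp only [subst_stT, subst_ltT, subst_triT]
    refine ⟨_, ⟨_, _, _, rfl, hs, .cons hb (.cons (hΓ h) ht), rfl⟩, ?_⟩
    simp only [wordOf_ltT, wordOf_triT]
    exact step_left [] [] h

theorem rewrite_of_rule {M : TM} {l r : Term} (h : RMRule M l r) (σ : ℕ → Term) {u : Term}
    (hu : l.subst σ = u) : ∃ v, RewriteS (RM M) u v :=
  ⟨_, hu ▸ RewriteS.rule l r σ h⟩

/-- An intended term whose configuration has a successor is not a normal form. -/
theorem exists_rewrite {M : TM} {u : Term} {c c' : Config}
    (hu : Intended M u c) (h : TMStep M c c') : ∃ v, RewriteS (RM M) u v := by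
  obtain ⟨q, s, t, rfl, hs, ht, rfl⟩ := hu
  rcases h with ⟨f', h, -, -⟩ | ⟨f', h, -, -⟩
  · cases ht with
    | tri =>
      have h' : ((q, M.blank), (c'.1, f', false)) ∈ M.delta := by
        simpa [tapeOf, wordOf_triT] using h
      cases hs with
      | tri => exact rewrite_of_rule (.blankLtri h') Term.var (by simp only [subst_stT, subst_triT])
      | @cons g x hg hx =>
        exact rewrite_of_rule (.blankL h' hg) (fun _ => x)
          (by simp only [subst_stT, subst_triT, subst_ltT, subst_var])
    | @cons f y hf hy =>
      have h' : ((q, f), (c'.1, f', false)) ∈ M.delta := by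
        simpa [tapeOf, wordOf_ltT] using h
      cases hs with
      | tri =>
        exact rewrite_of_rule (.moveLtri h') (fun _ => y)
          (by simp only [subst_stT, subst_triT, subst_ltT, subst_var])
      | @cons g x hg hx =>
        exact rewrite_of_rule (.moveL h' hg) (fun n => if n = 0 then x else y)
          (by simp [subst_stT, subst_ltT, subst_var])
  · cases ht with
    | tri =>
      have h' : ((q, M.blank), (c'.1, f', true)) ∈ M.delta := by
        simpa [tapeOf, wordOf_triT] using h
      exact rewrite_of_rule (.blankR h') (fun _ => s)
        (by simp only [subst_stT, subst_triT, subst_var])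
    | @cons f y hf hy =>
      have h' : ((q, f), (c'.1, f', true)) ∈ M.delta := by
        simpa [tapeOf, wordOf_ltT] using h
      exact rewrite_of_rule (.moveR h') (fun n => if n = 0 then s else y)
        (by simp [subst_stT, subst_ltT, subst_var])

/-! ### Termination and halting -/

/-- For every Turing machine `M` and every intended term `q(s,t)` of `R_M`:
`R_M` is strongly normalizing on `q(s,t)` iff `M` halts on the configuration
`Φ(q(s,t))`. -/
theorem rm_sn_iff_halts (M : TM) (hM : WFTM M) (q : ℕ) (s t : Term)
    (hq : q ∈ M.states) (hs : TapeTerm M s) (ht : TapeTerm M t) :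
    SNonS (RM M) (stT q s t) ↔
      HaltsOn M (q, tapeOf M.blank (wordOf s) (wordOf t)) := by
  have hΦ : Intended M (stT q s t) (q, tapeOf M.blank (wordOf s) (wordOf t)) :=
    ⟨q, s, t, rfl, hs, ht, rfl⟩
  generalize (q, tapeOf M.blank (wordOf s) (wordOf t)) = c at hΦ ⊢
  generalize stT q s t = u at hΦ ⊢
  constructor
  · intro hSN
    by_contra hH
    apply hSN
    -- the intended terms whose configuration does not halt are closed under some rewrite step
    have next : ∀ x : {x : Term // ∃ c, Intended M x c ∧ ¬ HaltsOn M c},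
        ∃ y : {x : Term // ∃ c, Intended M x c ∧ ¬ HaltsOn M c},
          RewriteS (RM M) x.1 y.1 := by
      rintro ⟨x, d, hx, hd⟩
      have hstep : ∃ d', TMStep M d d' := by
        by_contra! hno
        exact hd ⟨d, .refl, hno⟩
      obtain ⟨d', hd'⟩ := hstep
      obtain ⟨y, hy⟩ := exists_rewrite hx hd'
      obtain ⟨e, he, hde⟩ := rewrite_intended hM hx hy
      refine ⟨⟨y, e, he, ?_⟩, hy⟩
      rintro ⟨e', hr, hfin⟩
      exact hd ⟨e', .head hde hr, hfin⟩
    choose nxt hnxt using next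
    refine ⟨fun n => (nxt^[n] ⟨u, c, hΦ, hH⟩).1, rfl, fun n => ?_⟩
    simp only [Function.iterate_succ_apply']
    exact hnxt _
  · rintro ⟨c', hr, hfin⟩ ⟨f, rfl, hf⟩
    -- by determinism, every reachable configuration is denoted by a term of the sequence
    have hvisit : ∃ n, Intended M (f n) c' := by
      clear hfin
      induction hr with
      | refl => exact ⟨0, hΦ⟩
      | tail _ hstep ih =>
        obtain ⟨n, hn⟩ := ih
        obtain ⟨e, he, hde⟩ := rewrite_intended hM hn (hf n)
        exact ⟨n + 1, TMStep.det hM hde hstep ▸ he⟩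
    obtain ⟨n, hn⟩ := hvisit
    obtain ⟨e, -, hde⟩ := rewrite_intended hM hn (hf n)
    exact hfin e hde
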